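/- arXiv:2411.09898 — 5 statements merged into one kernel-verified Lean document; each statement's English description precedes it below -/
import Mathlib

section
/- Let Ω ⊆ ℝ² be a nonempty open set that is simply connected (as a topological subspace of ℝ²), and let F : ℝ² → ℝ² be continuously differentiable on Ω with div F(x) = 0 for all x ∈ Ω. Then there exists a twice continuously differentiable function φ : Ω → ℝ such that curl φ(x) = F(x) for all x ∈ Ω, i.e., ∂φ/∂x₂ = F₁ and −∂φ/∂x₁ = F₂ on Ω. -/
/-!
The rotated field gives the 1-form `ω = F₁ dx₂ - F₂ dx₁`, and `div F = 0` says exactly that `ω` is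
closed. On each ball inside `Ω` a closed form has a primitive (`local_primitive`, the Poincaré lemma
for convex sets), and two such primitives differ by a locally constant function wherever both are
defined.

The local primitives are glued by a covering space argument. Over `Ω`, the germs of primitives form
a fibre bundle with fibre `ℝ` in its discrete topology, with transition functions the translations
by the locally constant differences `fᵢ - fⱼ`. This bundle is a covering map, so, `Ω` being simply
connected and locally path connected, the identity of `Ω` lifts to a global section
(`exists_glue_of_sub_locally_const`). The section selects a germ at each point in a locally
constant way, and the values of these germs form a global primitive `φ` of `ω`
(`exists_primitive_of_closed`). Since `dφ = ω` is `C¹`, the function `φ` is `C²`.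
-/

open MeasureTheory Set

/-- First partial derivative ∂f/∂x₁. -/
noncomputable def pd1 (f : ℝ × ℝ → ℝ) (x : ℝ × ℝ) : ℝ := fderiv ℝ f x (1, 0)

/-- Second partial derivative ∂f/∂x₂. -/
noncomputable def pd2 (f : ℝ × ℝ → ℝ) (x : ℝ × ℝ) : ℝ := fderiv ℝ f x (0, 1)

/-- Vector curl of a scalar function on ℝ²: curl φ = (∂φ/∂x₂, −∂φ/∂x₁). -/
noncomputable def scurl (f : ℝ × ℝ → ℝ) (x : ℝ × ℝ) : ℝ × ℝ := (pd2 f x, -pd1 f x)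

/-- Divergence of a vector field on ℝ²: div F = ∂F₁/∂x₁ + ∂F₂/∂x₂. -/
noncomputable def div2 (F : ℝ × ℝ → ℝ × ℝ) (x : ℝ × ℝ) : ℝ :=
  pd1 (fun y => (F y).1) x + pd2 (fun y => (F y).2) x

open Topology

/-- The real numbers with the discrete topology, used as the fibre of a covering space. -/
def DiscreteReal : Type := ℝ

noncomputable instance : AddCommGroup DiscreteReal := inferInstanceAs (AddCommGroup ℝ)

instance : TopologicalSpace DiscreteReal := ⊥

instance : DiscreteTopology DiscreteReal := ⟨rfl⟩

/-- The covering space of germs of local potentials: the point `v` over `x` in the chart `i`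
stands for the germ at `x` of `f i + v`. Rewriting this germ in the chart `j` translates `v` by
`f i x - f j x`. -/
noncomputable def germCore {X : Type*} [TopologicalSpace X] (U : X → Set X)
    (hU : ∀ i, IsOpen (U i)) (hmem : ∀ i, i ∈ U i) (f : X → X → DiscreteReal)
    (h : ∀ i j, ∀ x ∈ U i ∩ U j, ∀ᶠ y in 𝓝 x, f i y - f j y = f i x - f j x) :
    FiberBundleCore X X DiscreteReal where
  baseSet := U
  isOpen_baseSet := hU
  indexAt := id
  mem_baseSet_at := hmem
  coordChange i j x v := v + (f i x - f j x)
  coordChange_self i x _ v := by simp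
  continuousOn_coordChange i j := by
    rintro ⟨x, v⟩ ⟨hx, -⟩
    refine (ContinuousAt.add continuousAt_snd ?_).continuousWithinAt
    refine (continuousAt_const (y := f i x - f j x)).congr ?_
    filter_upwards [continuousAt_fst.eventually (h i j x hx)] with p hp using hp.symm
  coordChange_comp i j k x _ v := by abel

/-- Vanishing of the first cohomology of a simply connected space with real coefficients: functions
`f i` whose differences are locally constant on the overlaps of the `U i` can be corrected by
constants into a single function `φ`, near each point `x` equal to `f x` up to a constant. -/
theorem exists_glue_of_sub_locally_const {X : Type*} [TopologicalSpace X]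
    [SimplyConnectedSpace X] [LocallyPathConnectedSpace X] (U : X → Set X)
    (hU : ∀ i, IsOpen (U i)) (hmem : ∀ i, i ∈ U i) (f : X → X → ℝ)
    (h : ∀ i j, ∀ x ∈ U i ∩ U j, ∀ᶠ y in 𝓝 x, f i y - f j y = f i x - f j x) :
    ∃ φ : X → ℝ, ∀ x, ∃ c : ℝ, ∀ᶠ y in 𝓝 x, φ y = f x y + c := by
  let Z := germCore U hU hmem f h
  have hcov : IsCoveringMap (Bundle.TotalSpace.proj : Z.TotalSpace → X) :=
    FiberBundle.isCoveringMap (F := DiscreteReal) (E := Z.Fiber)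
  obtain ⟨x₀⟩ : Nonempty X := inferInstance
  obtain ⟨s, ⟨-, hs⟩, -⟩ := hcov.existsUnique_continuousMap_lifts (ContinuousMap.id X) x₀
    (⟨x₀, (0 : DiscreteReal)⟩ : Z.TotalSpace) rfl
  have hs' : ∀ x, (s x).1 = x := fun x ↦ congrFun hs x
  let v : X → ℝ := fun x ↦ (s x).2
  refine ⟨fun x ↦ v x + f x x, fun x ↦ ⟨v x, ?_⟩⟩
  -- The coordinate of the section in the chart at `x` is continuous into a discrete space.
  have hmemx : s x ∈ (Z.localTriv x).source := by
    rw [Z.mem_localTriv_source, ← Z.baseSet_at, hs']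
    exact hmem x
  have hcont : ContinuousAt (fun y ↦ ((Z.localTriv x) (s y)).2) x :=
    (((Z.localTriv x).toOpenPartialHomeomorph.continuousAt hmemx).snd).comp (f := s)
      s.continuous.continuousAt
  have hconst := hcont.eventually (discreteTopology_iff_singleton_mem_nhds.1 inferInstance _)
  have key : ∀ y, ((Z.localTriv x) (s y)).2 = (v y + (f y y - f x y) : ℝ) := by
    intro y
    rw [Z.localTriv_apply]
    change v y + (f (s y).1 (s y).1 - f x (s y).1) = _
    rw [hs']
  filter_upwards [hconst] with y hy
  have hy' : v y + (f y y - f x y) = v x + (f x x - f x x) := (key y).symm.trans (hy.trans (key x))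
  linarith

theorem local_primitive {E : Type*} [NormedAddCommGroup E] [NormedSpace ℝ E] {s : Set E}
    (hs : IsOpen s) {ω : E → E →L[ℝ] ℝ} (hω : DifferentiableOn ℝ ω s)
    (hsymm : ∀ a ∈ s, ∀ x y, fderiv ℝ ω a x y = fderiv ℝ ω a y x) (a : s) :
    ∃ r > 0, Metric.ball (a : E) r ⊆ s ∧
      ∃ f : E → ℝ, ∀ b ∈ Metric.ball (a : E) r, HasFDerivAt f (ω b) b := by
  obtain ⟨r, hr, hrs⟩ := Metric.isOpen_iff.1 hs a a.2
  exact ⟨r, hr, hrs, (convex_ball _ _).exists_forall_hasFDerivAt_of_fderiv_symmetric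
    Metric.isOpen_ball (hω.mono hrs) fun b hb ↦ hsymm b (hrs hb)⟩

/-- The Poincaré lemma for 1-forms on simply connected open sets. -/
theorem exists_primitive_of_closed {E : Type*} [NormedAddCommGroup E] [NormedSpace ℝ E]
    {s : Set E} (hs : IsOpen s) (hsc : SimplyConnectedSpace s) {ω : E → E →L[ℝ] ℝ}
    (hω : DifferentiableOn ℝ ω s)
    (hsymm : ∀ a ∈ s, ∀ x y, fderiv ℝ ω a x y = fderiv ℝ ω a y x) :
    ∃ φ : E → ℝ, ∀ a ∈ s, HasFDerivAt φ (ω a) a := by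
  classical
  have := hs.locallyPathConnectedSpace
  choose r hr hrs f hf using local_primitive hs hω hsymm
  obtain ⟨φ, hφ⟩ := exists_glue_of_sub_locally_const
    (fun i : s ↦ (Subtype.val ⁻¹' Metric.ball (i : E) (r i) : Set s))
    (fun i ↦ Metric.isOpen_ball.preimage continuous_subtype_val)
    (fun i ↦ Metric.mem_ball_self (hr i)) (fun i x ↦ f i x) (by
      intro i j x hx
      have hsub : ∀ y ∈ Metric.ball (i : E) (r i) ∩ Metric.ball (j : E) (r j),
          HasFDerivAt (fun z ↦ f i z - f j z) (0 : E →L[ℝ] ℝ) y := fun y hy ↦ by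
        exact sub_self (ω y) ▸ (hf i y hy.1).fun_sub (hf j y hy.2)
      have hopen : IsOpen (Metric.ball (i : E) (r i) ∩ Metric.ball (j : E) (r j)) :=
        Metric.isOpen_ball.inter Metric.isOpen_ball
      filter_upwards [(hopen.preimage continuous_subtype_val).mem_nhds hx] with y hy
      exact hopen.is_const_of_fderiv_eq_zero (𝕜 := ℝ)
        ((convex_ball _ _).inter (convex_ball _ _)).isPreconnected
        (fun z hz ↦ (hsub z hz).differentiableAt.differentiableWithinAt)
        (fun z hz ↦ (hsub z hz).fderiv) hy hx)
  refine ⟨fun x ↦ if hx : x ∈ s then φ ⟨x, hx⟩ else 0, fun a ha ↦ ?_⟩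
  obtain ⟨c, hc⟩ := hφ ⟨a, ha⟩
  refine ((hf ⟨a, ha⟩ a (Metric.mem_ball_self (hr _))).add_const c).congr_of_eventuallyEq ?_
  rw [nhds_subtype_eq_comap, Filter.eventually_comap] at hc
  filter_upwards [hc, hs.mem_nhds ha] with y hy hys
  simpa [hys] using hy ⟨y, hys⟩ rfl

/-- On a nonempty open simply connected set Ω ⊆ ℝ², every divergence-free C¹ vector field
is the vector curl of a C² scalar potential. -/
theorem divFree_exists_curl_potential
    (Ω : Set (ℝ × ℝ)) (hΩ : IsOpen Ω) (hne : Ω.Nonempty)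
    (hsc : SimplyConnectedSpace Ω)
    (F : ℝ × ℝ → ℝ × ℝ) (hF : ContDiffOn ℝ 1 F Ω)
    (hdiv : ∀ x ∈ Ω, div2 F x = 0) :
    ∃ φ : ℝ × ℝ → ℝ, ContDiffOn ℝ 2 φ Ω ∧ ∀ x ∈ Ω, scurl φ x = F x := by
  -- `J w` is the covector `(u₁, u₂) ↦ w₁ u₂ - w₂ u₁`, so that `J ∘ F` is `F₁ dx₂ - F₂ dx₁`.
  let J : ℝ × ℝ →L[ℝ] (ℝ × ℝ →L[ℝ] ℝ) :=
    (ContinuousLinearMap.fst ℝ ℝ ℝ).smulRight (ContinuousLinearMap.snd ℝ ℝ ℝ) -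
      (ContinuousLinearMap.snd ℝ ℝ ℝ).smulRight (ContinuousLinearMap.fst ℝ ℝ ℝ)
  have hJ : ∀ w u, J w u = w.1 * u.2 - w.2 * u.1 := fun w u ↦ by simp [J]
  have hω : ContDiffOn ℝ 1 (fun x ↦ J (F x)) Ω := J.contDiff.comp_contDiffOn hF
  have hFd : ∀ a ∈ Ω, DifferentiableAt ℝ F a := fun a ha ↦
    (hF.differentiableOn one_ne_zero).differentiableAt (hΩ.mem_nhds ha)
  obtain ⟨φ, hφ⟩ := exists_primitive_of_closed hΩ hsc (hω.differentiableOn one_ne_zero) (by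
    intro a ha x y
    have hd := hdiv a ha
    have hFa := (hFd a ha).hasFDerivAt
    have hJF : HasFDerivAt (fun x ↦ J (F x)) (J ∘L fderiv ℝ F a) a := J.hasFDerivAt.comp a hFa
    rw [div2, pd1, pd2, hFa.fst.fderiv, hFa.snd.fderiv] at hd
    simp only [ContinuousLinearMap.comp_apply, ContinuousLinearMap.coe_fst',
      ContinuousLinearMap.coe_snd'] at hd
    -- Both sides are bilinear in `x, y`; expanding in the standard basis, their difference is
    -- a multiple of the divergence.
    have hexp : ∀ u : ℝ × ℝ, fderiv ℝ F a u =
        u.1 • fderiv ℝ F a (1, 0) + u.2 • fderiv ℝ F a (0, 1) := fun u ↦ by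
      rw [← map_smul, ← map_smul, ← map_add]
      simp
    rw [hJF.fderiv, ContinuousLinearMap.comp_apply, ContinuousLinearMap.comp_apply, hJ, hJ,
      hexp x, hexp y]
    simp only [Prod.fst_add, Prod.snd_add, Prod.smul_fst, Prod.smul_snd, smul_eq_mul]
    linear_combination (x.1 * y.2 - x.2 * y.1) * hd)
  refine ⟨φ, ?_, fun x hx ↦ ?_⟩
  · rw [show (2 : WithTop ℕ∞) = 1 + 1 by norm_num, contDiffOn_succ_iff_fderiv_of_isOpen hΩ]
    exact ⟨fun x hx ↦ (hφ x hx).differentiableAt.differentiableWithinAt, by simp,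
      hω.congr fun x hx ↦ (hφ x hx).fderiv⟩
  · rw [scurl, pd1, pd2, (hφ x hx).fderiv, hJ, hJ]
    simp
end

section
/- Let Ω ⊆ ℝ² be a nonempty open set that is connected and simply connected, let f : Ω → ℝ be continuous, and let u, ũ : ℝ² → ℝ be twice continuously differentiable on Ω with Δu = −f and Δũ = −f on Ω. Then: (i) there exists a twice continuously differentiable φ : Ω → ℝ with Δφ = 0 on Ω and curl φ(x) = ∇u(x) − ∇ũ(x) for all x ∈ Ω; and (ii) for every such φ and every differentiable u_c : Ω → ℝ satisfying ∇u_c(x) = ∇ũ(x) + curl φ(x) for all x ∈ Ω, there exists a constant C ∈ ℝ such that u_c(x) = u(x) + C for all x ∈ Ω. -/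
/-!
The difference `w = u - ut` is harmonic, so the rotated gradient `(-∂₂w, ∂₁w)` is a closed `C¹`
one-form on `Ω`. On a simply connected open set it has a primitive `φ`, which satisfies
`curl φ = ∇w`; since `∇φ` is `C¹`, `φ` is `C²`, and `Δφ = -∂₁∂₂w + ∂₂∂₁w = 0`.
Conversely, the hypotheses on `uc` give `∇uc = ∇u` on the connected open set `Ω`,
whence `uc - u` is constant.

The global primitive (`exists_primitive_of_simplyConnected`) comes from covering space theory.
On each ball contained in `Ω` the convex Poincaré lemma provides a primitive, and two such
primitives differ by a locally constant function on the intersection of their balls. These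
differences are the transition functions of a bundle over `Ω` whose fibre is `ℝ` with the discrete
topology: the space of germs of primitives. It is a covering space of `Ω`, so the identity of the
simply connected space `Ω` lifts to a continuous section, and a continuous section is a global
primitive.
-/

open MeasureTheory Set

/-- Gradient of a scalar function on ℝ². -/
noncomputable def grad2 (f : ℝ × ℝ → ℝ) (x : ℝ × ℝ) : ℝ × ℝ := (pd1 f x, pd2 f x)

/-- Laplacian of a scalar function on ℝ². -/
noncomputable def lap2 (f : ℝ × ℝ → ℝ) (x : ℝ × ℝ) : ℝ := pd1 (pd1 f) x + pd2 (pd2 f) x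

/-- The real numbers with the discrete topology, the fibre of the bundle of germs of primitives.
A structure rather than a type synonym, so that the usual topology of `ℝ` cannot interfere. -/
structure DiscreteReal_s5 where
  /-- The underlying real number. -/
  val : ℝ

instance inst_s5 : TopologicalSpace DiscreteReal_s5 := ⊥

instance inst_s5_2 : DiscreteTopology DiscreteReal_s5 := ⟨rfl⟩

section Primitive

open Filter Topology

variable {E : Type*} [NormedAddCommGroup E] [NormedSpace ℝ E]

/-- The bundle of germs of primitives of `ω`, in the charts given by the local primitives `G i`
on the balls `B i`. The coordinate `v` in the chart `i` over the point `x` stands for the germ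
at `x` of a primitive whose value at `x` is `G i x + v`. -/
def primitiveCore (Ω : Set E) (ω : E → E →L[ℝ] ℝ) (r : Ω → ℝ) (hr : ∀ i, 0 < r i)
    (G : Ω → E → ℝ)
    (hG : ∀ i : Ω, ∀ x ∈ Metric.ball (i : E) (r i), HasFDerivAt (G i) (ω x) x) :
    FiberBundleCore Ω Ω DiscreteReal_s5 where
  baseSet i := {x | (x : E) ∈ Metric.ball (i : E) (r i)}
  isOpen_baseSet i := Metric.isOpen_ball.preimage continuous_subtype_val
  indexAt x := x
  mem_baseSet_at x := Metric.mem_ball_self (hr x)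
  coordChange i j x v := ⟨v.val + (G i x - G j x)⟩
  coordChange_self i x _ v := by simp
  continuousOn_coordChange i j := by
    -- The intersection of two balls is convex, so `G i - G j` is constant on it.
    obtain ⟨c, hc⟩ : ∃ c : ℝ, ∀ x ∈ Metric.ball (i : E) (r i) ∩ Metric.ball (j : E) (r j),
        G i x - G j x = c := by
      have ho := (Metric.isOpen_ball (x := (i : E)) (ε := r i)).inter
        (Metric.isOpen_ball (x := (j : E)) (ε := r j))
      have hd : ∀ x ∈ Metric.ball (i : E) (r i) ∩ Metric.ball (j : E) (r j),
          HasFDerivAt (fun y => G i y - G j y) (0 : E →L[ℝ] ℝ) x := fun x hx => by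
        simpa using (hG i x hx.1).fun_sub (hG j x hx.2)
      exact ho.exists_is_const_of_fderiv_eq_zero
        ((convex_ball _ _).inter (convex_ball _ _)).isPreconnected
        (fun x hx => (hd x hx).differentiableAt.differentiableWithinAt)
        (fun x hx => (hd x hx).fderiv)
    have h : Continuous fun p : Ω × DiscreteReal_s5 => (⟨p.2.val + c⟩ : DiscreteReal_s5) :=
      (continuous_of_discreteTopology (f := fun v : DiscreteReal_s5 =>
        (⟨v.val + c⟩ : DiscreteReal_s5))).comp continuous_snd
    refine h.continuousOn.congr fun p hp => ?_
    simp only [hc p.1 hp.1]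
  coordChange_comp i j k x _ v := by
    simp only [DiscreteReal_s5.mk.injEq]
    ring

/-- A closed differentiable one-form on a simply connected open set is exact. -/
theorem exists_primitive_of_simplyConnected {Ω : Set E} (hΩ : IsOpen Ω)
    [hsc : SimplyConnectedSpace Ω] {ω : E → E →L[ℝ] ℝ} (hω : DifferentiableOn ℝ ω Ω)
    (hsymm : ∀ x ∈ Ω, ∀ a b, fderiv ℝ ω x a b = fderiv ℝ ω x b a) :
    ∃ φ : E → ℝ, ∀ x ∈ Ω, HasFDerivAt φ (ω x) x := by
  classical
  have hball : ∀ i : Ω, ∃ r > 0, Metric.ball (i : E) r ⊆ Ω := fun i =>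
    Metric.isOpen_iff.1 hΩ i i.2
  choose r hr hrΩ using hball
  have hprim : ∀ i : Ω, ∃ g : E → ℝ, ∀ x ∈ Metric.ball (i : E) (r i),
      HasFDerivAt g (ω x) x := fun i =>
    (convex_ball (i : E) (r i)).exists_forall_hasFDerivAt_of_fderiv_symmetric
      Metric.isOpen_ball (hω.mono (hrΩ i)) fun a ha => hsymm a (hrΩ i ha)
  choose G hG using hprim
  let Z := primitiveCore Ω ω r hr G hG
  have := hΩ.locallyPathConnectedSpace
  have hcov : IsCoveringMap (Bundle.TotalSpace.proj : Z.TotalSpace → Ω) :=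
    FiberBundle.isCoveringMap (F := DiscreteReal_s5) (E := Z.Fiber)
  obtain ⟨x₀⟩ : Nonempty Ω := inferInstance
  obtain ⟨s, ⟨-, hs⟩, -⟩ := hcov.existsUnique_continuousMap_lifts (ContinuousMap.id Ω) x₀
    (⟨x₀, (⟨0⟩ : DiscreteReal_s5)⟩ : Z.TotalSpace) rfl
  have hs1 : ∀ x, (s x).1 = x := fun x => congrFun hs x
  -- The value of a section at a point: chart primitive plus fibre coordinate.
  let V : Z.TotalSpace → ℝ := fun p => G p.1 p.1 + DiscreteReal_s5.val p.2
  refine ⟨fun y => if h : y ∈ Ω then V (s ⟨y, h⟩) else 0, fun y hy => ?_⟩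
  let i : Ω := ⟨y, hy⟩
  have hi : i ∈ Z.baseSet i := Z.mem_baseSet_at i
  have hcont : ContinuousAt (fun x => (Z.localTriv i (s x)).2) i := by
    have h1 : ContinuousAt (Z.localTriv i) (s i) :=
      (Z.localTriv i).continuousAt ((Z.mem_localTriv_source i _).2 (by rw [hs1]; exact hi))
    exact continuous_snd.continuousAt.comp (h1.comp s.continuous.continuousAt)
  -- Read in the chart `i`, the section is locally constant, the fibre being discrete.
  have hev : ∀ᶠ x in 𝓝 i, (Z.localTriv i (s x)).2 = (Z.localTriv i (s i)).2 :=
    hcont.eventually (p := fun v => v = (Z.localTriv i (s i)).2) (by rw [nhds_discrete]; exact rfl)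
  have hval : ∀ x : Ω, (Z.localTriv i (s x)).2.val = V (s x) - G i x := fun x => by
    have : (Z.localTriv i (s x)).2.val
        = DiscreteReal_s5.val (s x).2 + (G (s x).1 (s x).1 - G i (s x).1) := rfl
    rw [this, hs1 x]
    simp only [V, hs1 x]
    ring
  have hev' : ∀ᶠ z in 𝓝 y, (if h : z ∈ Ω then V (s ⟨z, h⟩) else 0)
      = G i z + (Z.localTriv i (s i)).2.val := by
    rw [← map_nhds_subtype_coe_eq_nhds hy (hΩ.mem_nhds hy)]
    refine eventually_map.2 (hev.mono fun x hx => ?_)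
    rw [← hx, hval, dif_pos x.2]
    ring
  exact ((hG i y (Metric.mem_ball_self (hr i))).add_const _).congr_of_eventuallyEq hev'

end Primitive

/-- The clockwise rotation `(a, b) ↦ (b, -a)`. Composing with it turns the differential of `w`
into the one-form `-∂₂w dx₁ + ∂₁w dx₂`. -/
def rotCLM : ℝ × ℝ →L[ℝ] ℝ × ℝ :=
  (ContinuousLinearMap.snd ℝ ℝ ℝ).prod (-ContinuousLinearMap.fst ℝ ℝ ℝ)

@[simp] lemma rotCLM_apply (v : ℝ × ℝ) : rotCLM v = (v.2, -v.1) := rfl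

lemma clm_apply_eq_basis (A : ℝ × ℝ →L[ℝ] ℝ) (v : ℝ × ℝ) :
    A v = v.1 * A (1, 0) + v.2 * A (0, 1) := by
  have : v = v.1 • ((1, 0) : ℝ × ℝ) + v.2 • ((0, 1) : ℝ × ℝ) := by ext <;> simp
  conv_lhs => rw [this]
  rw [map_add, map_smul, map_smul, smul_eq_mul, smul_eq_mul]

lemma clm_ext_basis {A B : ℝ × ℝ →L[ℝ] ℝ} (h1 : A (1, 0) = B (1, 0))
    (h2 : A (0, 1) = B (0, 1)) : A = B := by
  ext <;> simp [h1, h2]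

/-- Second partial derivatives as values of the second Fréchet derivative. -/
lemma fderiv_fderiv_apply_const {w : ℝ × ℝ → ℝ} {x : ℝ × ℝ} (h : ContDiffAt ℝ 2 w x)
    (a b : ℝ × ℝ) :
    fderiv ℝ (fun y => fderiv ℝ w y b) x a = fderiv ℝ (fderiv ℝ w) x a b := by
  have hd : DifferentiableAt ℝ (fderiv ℝ w) x :=
    (h.fderiv_right (m := 1) (by norm_num)).differentiableAt (by norm_num)
  rw [fderiv_clm_apply hd (differentiableAt_const b)]
  simp

lemma lap2_eq {w : ℝ × ℝ → ℝ} {x : ℝ × ℝ} (h : ContDiffAt ℝ 2 w x) :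
    lap2 w x = fderiv ℝ (fderiv ℝ w) x (1, 0) (1, 0)
      + fderiv ℝ (fderiv ℝ w) x (0, 1) (0, 1) := by
  rw [← fderiv_fderiv_apply_const h, ← fderiv_fderiv_apply_const h]
  rfl

/-- A harmonic function on a simply connected open set has a harmonic conjugate. -/
theorem exists_harmonic_conjugate {Ω : Set (ℝ × ℝ)} (hΩ : IsOpen Ω)
    [SimplyConnectedSpace Ω] {w : ℝ × ℝ → ℝ} (hw : ContDiffOn ℝ 2 w Ω)
    (hlap : ∀ x ∈ Ω, lap2 w x = 0) :
    ∃ φ : ℝ × ℝ → ℝ, ContDiffOn ℝ 2 φ Ω ∧ (∀ x ∈ Ω, lap2 φ x = 0) ∧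
      ∀ x ∈ Ω, scurl φ x = grad2 w x := by
  have hwx : ∀ x ∈ Ω, ContDiffAt ℝ 2 w x := fun x hx => hw.contDiffAt (hΩ.mem_nhds hx)
  have hsym : ∀ x ∈ Ω, ∀ a b, fderiv ℝ (fderiv ℝ w) x a b = fderiv ℝ (fderiv ℝ w) x b a :=
    fun x hx => (hwx x hx).isSymmSndFDerivAt (by simp)
  let ω : ℝ × ℝ → ℝ × ℝ →L[ℝ] ℝ := fun x => (fderiv ℝ w x).comp rotCLM
  have hdw : ContDiffOn ℝ 1 (fderiv ℝ w) Ω := hw.fderiv_of_isOpen hΩ (by norm_num)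
  have hω : ContDiffOn ℝ 1 ω Ω := hdw.clm_comp contDiffOn_const
  have hdω : ∀ x ∈ Ω, ∀ a b,
      fderiv ℝ ω x a b = fderiv ℝ (fderiv ℝ w) x a (rotCLM b) := fun x hx a b => by
    have hd : DifferentiableAt ℝ (fderiv ℝ w) x :=
      (hdw.contDiffAt (hΩ.mem_nhds hx)).differentiableAt (by norm_num)
    rw [fderiv_clm_comp hd (differentiableAt_const _)]
    simp
  obtain ⟨φ, hφ⟩ := exists_primitive_of_simplyConnected hΩ (hω.differentiableOn (by norm_num))
    (fun x hx a b => by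
      have hl := hlap x hx
      rw [lap2_eq (hwx x hx)] at hl
      have hs := hsym x hx (1, 0) (0, 1)
      rw [hdω x hx, hdω x hx]
      have key : ∀ a b : ℝ × ℝ, fderiv ℝ (fderiv ℝ w) x a b =
          a.1 * b.1 * fderiv ℝ (fderiv ℝ w) x (1, 0) (1, 0)
          + a.1 * b.2 * fderiv ℝ (fderiv ℝ w) x (1, 0) (0, 1)
          + a.2 * b.1 * fderiv ℝ (fderiv ℝ w) x (1, 0) (0, 1)
          + a.2 * b.2 * fderiv ℝ (fderiv ℝ w) x (0, 1) (0, 1) := fun a b => by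
        rw [clm_apply_eq_basis (fderiv ℝ (fderiv ℝ w) x a) b, hsym x hx a, hsym x hx a,
          clm_apply_eq_basis _ a, clm_apply_eq_basis (fderiv ℝ (fderiv ℝ w) x (0, 1)) a, ← hs]
        ring
      rw [key, key b, rotCLM_apply, rotCLM_apply]
      linear_combination (a.1 * b.2 - a.2 * b.1) * hl)
  have hfd : ∀ x ∈ Ω, fderiv ℝ φ x = ω x := fun x hx => (hφ x hx).fderiv
  have hφ2 : ContDiffOn ℝ 2 φ Ω := by
    rw [show (2 : WithTop ℕ∞) = 1 + 1 by norm_num, contDiffOn_succ_iff_fderiv_of_isOpen hΩ]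
    exact ⟨fun x hx => (hφ x hx).differentiableAt.differentiableWithinAt, by simp,
      hω.congr hfd⟩
  refine ⟨φ, hφ2, fun x hx => ?_, fun x hx => ?_⟩
  · have he : fderiv ℝ φ =ᶠ[nhds x] ω :=
      Filter.eventually_of_mem (hΩ.mem_nhds hx) hfd
    rw [lap2_eq (hφ2.contDiffAt (hΩ.mem_nhds hx)), he.fderiv_eq, hdω x hx, hdω x hx,
      rotCLM_apply, rotCLM_apply]
    have hn : ((0, -1) : ℝ × ℝ) = -(0, 1) := by simp
    simp only [hn, neg_zero, map_neg]
    rw [hsym x hx]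
    ring
  · have hn : ((0, -1) : ℝ × ℝ) = -(0, 1) := by simp
    simp [scurl, grad2, pd1, pd2, hfd x hx, ω, hn, -Prod.neg_mk]

/-- If u and ũ are C² functions on a nonempty open connected simply connected Ω ⊆ ℝ²
solving Δu = Δũ = −f, then (i) there is a harmonic C² corrector potential φ with
curl φ = ∇u − ∇ũ, and (ii) for every such φ and every differentiable u_c with
∇u_c = ∇ũ + curl φ on Ω, u_c differs from u by a constant. -/
theorem poisson_reconstruction_up_to_constant
    (Ω : Set (ℝ × ℝ)) (hΩ : IsOpen Ω) (hne : Ω.Nonempty)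
    (hconn : IsConnected Ω) (hsc : SimplyConnectedSpace Ω)
    (f u ut : ℝ × ℝ → ℝ)
    (hf : ContinuousOn f Ω)
    (hu : ContDiffOn ℝ 2 u Ω) (hut : ContDiffOn ℝ 2 ut Ω)
    (hequ : ∀ x ∈ Ω, lap2 u x = -f x)
    (hequt : ∀ x ∈ Ω, lap2 ut x = -f x) :
    (∃ φ : ℝ × ℝ → ℝ, ContDiffOn ℝ 2 φ Ω ∧ (∀ x ∈ Ω, lap2 φ x = 0) ∧
        ∀ x ∈ Ω, scurl φ x = grad2 u x - grad2 ut x) ∧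
    (∀ φ : ℝ × ℝ → ℝ, ContDiffOn ℝ 2 φ Ω → (∀ x ∈ Ω, lap2 φ x = 0) →
      (∀ x ∈ Ω, scurl φ x = grad2 u x - grad2 ut x) →
      ∀ uc : ℝ × ℝ → ℝ, DifferentiableOn ℝ uc Ω →
        (∀ x ∈ Ω, grad2 uc x = grad2 ut x + scurl φ x) →
        ∃ C : ℝ, ∀ x ∈ Ω, uc x = u x + C) := by
  have hux : ∀ x ∈ Ω, ContDiffAt ℝ 2 u x := fun x hx => hu.contDiffAt (hΩ.mem_nhds hx)
  have hutx : ∀ x ∈ Ω, ContDiffAt ℝ 2 ut x := fun x hx => hut.contDiffAt (hΩ.mem_nhds hx)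
  have hsub : ∀ x ∈ Ω, fderiv ℝ (fun y => u y - ut y) x = fderiv ℝ u x - fderiv ℝ ut x :=
    fun x hx => fderiv_fun_sub ((hux x hx).differentiableAt (by norm_num))
      ((hutx x hx).differentiableAt (by norm_num))
  constructor
  · obtain ⟨φ, h1, h2, h3⟩ := exists_harmonic_conjugate hΩ (hu.sub hut) (fun x hx => by
      have he : fderiv ℝ (fun y => u y - ut y) =ᶠ[nhds x] fun y => fderiv ℝ u y - fderiv ℝ ut y :=
        Filter.eventually_of_mem (hΩ.mem_nhds hx) hsub
      have hd : ∀ {g : ℝ × ℝ → ℝ}, ContDiffAt ℝ 2 g x → DifferentiableAt ℝ (fderiv ℝ g) x :=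
        fun h => (h.fderiv_right (m := 1) (by norm_num)).differentiableAt (by norm_num)
      have e1 := hequ x hx
      have e2 := hequt x hx
      rw [lap2_eq (hux x hx)] at e1
      rw [lap2_eq (hutx x hx)] at e2
      rw [lap2_eq ((hux x hx).sub (hutx x hx)), he.fderiv_eq,
        fderiv_fun_sub (hd (hux x hx)) (hd (hutx x hx))]
      simp only [sub_apply]
      linear_combination e1 - e2)
    refine ⟨φ, h1, h2, fun x hx => ?_⟩
    rw [h3 x hx]
    simp [grad2, pd1, pd2, hsub x hx]
  · intro φ _ _ hcurl uc huc hgrad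
    obtain ⟨C, hC⟩ := hΩ.exists_eq_add_of_fderiv_eq hconn.isPreconnected huc
      (hu.differentiableOn (by norm_num)) (fun x hx => by
        have h := hgrad x hx
        rw [hcurl x hx, add_sub_cancel] at h
        exact clm_ext_basis (congrArg Prod.fst h) (congrArg Prod.snd h))
    exact ⟨C, fun x hx => hC hx⟩
end

section
/- Let D = {x ∈ ℝ² : |x| < 1} be the open unit disc and D̄ its closure. Let g : ℝ² → ℝ be continuous, and suppose: u : D̄ → ℝ is continuous on D̄, twice continuously differentiable on D, and u(x) = g(x) for all x with |x| = 1; ũ : ℝ² → ℝ is twice continuously differentiable on D with Δũ = Δu on D; φ : ℝ² → ℝ is twice continuously differentiable on D with curl φ = ∇u − ∇ũ on D; and u_c : D̄ → ℝ is continuous on D̄, differentiable on D, with ∇u_c = ∇ũ + curl φ on D. Fix any 0 ≤ θ₁ < θ₂ ≤ 2π and set C = (1/(θ₂ − θ₁)) ∫_{θ₁}^{θ₂} ( u_c(cos θ, sin θ) − g(cos θ, sin θ) ) dθ. Then u_c(x) − C = u(x) for all x ∈ D̄. -/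
/-!
On the open disc, `∇uc = ∇ut + curl φ = ∇ut + (∇u - ∇ut) = ∇u`, so `w = uc - u` has zero
gradient there. Restricting `w` to the segment from the origin to a point `x` of the closed disc
gives a function that is continuous on `[0, 1]` with zero derivative on `[0, 1)`; hence
`w x = w 0` on the whole closed disc, boundary included (`eq_origin_of_grad_eq`). Since `u = g` on
the unit circle, the average of `uc - g` over any boundary arc is that constant `w 0`.
-/

open MeasureTheory Set

/-- The open unit disc in ℝ² (Euclidean norm). -/
def unitDisc : Set (ℝ × ℝ) := {x : ℝ × ℝ | x.1 ^ 2 + x.2 ^ 2 < 1}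

/-- The closed unit disc in ℝ² (Euclidean norm). -/
def closedUnitDisc : Set (ℝ × ℝ) := {x : ℝ × ℝ | x.1 ^ 2 + x.2 ^ 2 ≤ 1}

theorem isOpen_unitDisc : IsOpen unitDisc :=
  isOpen_lt (by fun_prop) continuous_const

theorem fderiv_eq_of_grad2_eq {a b : ℝ × ℝ → ℝ} {x : ℝ × ℝ} (h : grad2 a x = grad2 b x) :
    fderiv ℝ a x = fderiv ℝ b x := by
  simp only [grad2, pd1, pd2, Prod.mk.injEq] at h
  ext
  · simpa using h.1
  · simpa using h.2

/-- Two functions, continuous on the closed disc, whose gradients agree on the open disc differ by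
a constant on the closed disc. -/
theorem eq_origin_of_grad_eq {a b : ℝ × ℝ → ℝ}
    (ha_cont : ContinuousOn a closedUnitDisc) (hb_cont : ContinuousOn b closedUnitDisc)
    (ha : DifferentiableOn ℝ a unitDisc) (hb : DifferentiableOn ℝ b unitDisc)
    (h : ∀ x ∈ unitDisc, grad2 a x = grad2 b x) {x : ℝ × ℝ} (hx : x ∈ closedUnitDisc) :
    a x - b x = a 0 - b 0 := by
  have hx' : x.1 ^ 2 + x.2 ^ 2 ≤ 1 := hx
  have hnorm : ∀ t : ℝ, (t • x).1 ^ 2 + (t • x).2 ^ 2 = t ^ 2 * (x.1 ^ 2 + x.2 ^ 2) := by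
    intro t
    simp only [Prod.smul_fst, Prod.smul_snd, smul_eq_mul]
    ring
  have hclosed : MapsTo (fun t : ℝ => t • x) (Icc 0 1) closedUnitDisc := by
    intro t ht
    change (t • x).1 ^ 2 + (t • x).2 ^ 2 ≤ 1
    rw [hnorm]
    exact mul_le_one₀ (pow_le_one₀ ht.1 ht.2) (by positivity) hx'
  have hopen : ∀ t ∈ Ico (0 : ℝ) 1, t • x ∈ unitDisc := by
    intro t ht
    change (t • x).1 ^ 2 + (t • x).2 ^ 2 < 1
    rw [hnorm]
    have ht2 : t ^ 2 < 1 := pow_lt_one₀ ht.1 ht.2 two_ne_zero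
    nlinarith [sq_nonneg t]
  have hcont : ContinuousOn (fun t : ℝ => a (t • x) - b (t • x)) (Icc 0 1) := by
    have hs : ContinuousOn (fun t : ℝ => t • x) (Icc 0 1) := by fun_prop
    exact (ha_cont.comp hs hclosed).sub (hb_cont.comp hs hclosed)
  have hderiv : ∀ t ∈ Ico (0 : ℝ) 1,
      HasDerivWithinAt (fun t : ℝ => a (t • x) - b (t • x)) 0 (Ici t) t := by
    intro t ht
    have hmem := hopen t ht
    have hnhds := isOpen_unitDisc.mem_nhds hmem
    have hs : HasDerivAt (fun t : ℝ => t • x) x t := by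
      simpa using (hasDerivAt_id t).smul_const x
    have hda := (ha.differentiableAt hnhds).hasFDerivAt.comp_hasDerivAt t hs
    have hdb := (hb.differentiableAt hnhds).hasFDerivAt.comp_hasDerivAt t hs
    have hd := hda.sub hdb
    rw [fderiv_eq_of_grad2_eq (h _ hmem), sub_self] at hd
    exact hd.hasDerivWithinAt
  simpa using constant_of_has_deriv_right_zero hcont hderiv 1 (by simp)

/-- The natural reconstruction of the Dirichlet solution on the unit disc: if u solves the
Dirichlet problem with boundary datum g, ũ solves the same interior equation, φ is a
corrector potential with curl φ = ∇u − ∇ũ, and u_c satisfies ∇u_c = ∇ũ + curl φ, then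
after subtracting the boundary-arc average C of u_c − g one recovers u on the closed disc. -/
theorem disc_reconstruction
    (g u ut φ uc : ℝ × ℝ → ℝ)
    (hg : Continuous g)
    (hu_cont : ContinuousOn u closedUnitDisc)
    (hu : ContDiffOn ℝ 2 u unitDisc)
    (hub : ∀ x : ℝ × ℝ, x.1 ^ 2 + x.2 ^ 2 = 1 → u x = g x)
    (hut : ContDiffOn ℝ 2 ut unitDisc)
    (hlap : ∀ x ∈ unitDisc, lap2 ut x = lap2 u x)
    (hφ : ContDiffOn ℝ 2 φ unitDisc)
    (hcurl : ∀ x ∈ unitDisc, scurl φ x = grad2 u x - grad2 ut x)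
    (huc_cont : ContinuousOn uc closedUnitDisc)
    (huc : DifferentiableOn ℝ uc unitDisc)
    (hgraduc : ∀ x ∈ unitDisc, grad2 uc x = grad2 ut x + scurl φ x)
    (θ₁ θ₂ : ℝ) (hθ₁ : 0 ≤ θ₁) (hθ₁₂ : θ₁ < θ₂) (hθ₂ : θ₂ ≤ 2 * Real.pi)
    (C : ℝ)
    (hC : C = (θ₂ - θ₁)⁻¹ *
      ∫ θ in θ₁..θ₂, (uc (Real.cos θ, Real.sin θ) - g (Real.cos θ, Real.sin θ))) :
    ∀ x ∈ closedUnitDisc, uc x - C = u x := by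
  have hgrad : ∀ x ∈ unitDisc, grad2 uc x = grad2 u x := by
    intro x hx
    rw [hgraduc x hx, hcurl x hx, add_sub_cancel]
  have hconst : ∀ x ∈ closedUnitDisc, uc x - u x = uc 0 - u 0 := fun x hx =>
    eq_origin_of_grad_eq huc_cont hu_cont huc (hu.differentiableOn two_ne_zero) hgrad hx
  have hcircle : ∀ θ : ℝ,
      uc (Real.cos θ, Real.sin θ) - g (Real.cos θ, Real.sin θ) = uc 0 - u 0 := by
    intro θ
    have hθ : Real.cos θ ^ 2 + Real.sin θ ^ 2 = 1 := Real.cos_sq_add_sin_sq θ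
    rw [← hub (Real.cos θ, Real.sin θ) hθ]
    exact hconst _ hθ.le
  have hC' : C = uc 0 - u 0 := by
    have hne : θ₂ - θ₁ ≠ 0 := (sub_pos.2 hθ₁₂).ne'
    simp only [hC, hcircle, intervalIntegral.integral_const, smul_eq_mul]
    rw [inv_mul_cancel_left₀ hne]
  intro x hx
  linarith [hconst x hx]
end

section
/- Let Ω = (−1,1) × (−1,1) ⊆ ℝ², Ω₊ = (−1,1) × (0,1), Ω₋ = (−1,1) × (−1,0), and Γ₀ = (−1,1) × {0}. Let F₊ : (−1,1) × [0,1) → ℝ² be continuous, continuously differentiable on Ω₊ with div F₊ = 0 on Ω₊, and let F₋ : (−1,1) × (−1,0] → ℝ² be continuous, continuously differentiable on Ω₋ with div F₋ = 0 on Ω₋. Assume the normal components match across the interface: (F₊)₂(x₁, 0) = (F₋)₂(x₁, 0) for all x₁ ∈ (−1,1). Then there exists a function φ : Ω → ℝ that is continuous on all of Ω, differentiable at every point of Ω₊ ∪ Ω₋, and satisfies curl φ(x) = F₊(x) for all x ∈ Ω₊ and curl φ(x) = F₋(x) for all x ∈ Ω₋. -/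
/-!
Encode `F` as the 1-form `ω = F₁ dx₂ - F₂ dx₁`: then `dφ = ω` says `curl φ = F`, and `ω` is closed
exactly when `div F = 0`.

The main ingredient is a Poincaré lemma up to the boundary (`hasFDerivWithinAt_segment_primitive`):
if `ω` is continuous on a convex set `s` and closed only in its interior, then integrating `ω` along
segments issued from an interior point `a` gives a primitive within all of `s`. Indeed Stokes'
formula on the triangle `a b c` with `b c ∈ s` only needs `ω` to be closed on the open triangle,
and this lies in the interior of `s` because `a` does.

Applied to each half square with its interface, this gives potentials `f` and `g` which are
differentiable up to the interface, with tangential derivatives `-(F₊)₂` and `-(F₋)₂` there. These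
agree, so `f - g` is constant on the interface; adding this constant to `g` and gluing gives `φ`.
-/

open MeasureTheory Set

/-- The square Ω = (−1,1) × (−1,1). -/
def sqAll : Set (ℝ × ℝ) := Ioo (-1 : ℝ) 1 ×ˢ Ioo (-1 : ℝ) 1

/-- The upper subdomain Ω₊ = (−1,1) × (0,1). -/
def sqP : Set (ℝ × ℝ) := Ioo (-1 : ℝ) 1 ×ˢ Ioo (0 : ℝ) 1

/-- The lower subdomain Ω₋ = (−1,1) × (−1,0). -/
def sqM : Set (ℝ × ℝ) := Ioo (-1 : ℝ) 1 ×ˢ Ioo (-1 : ℝ) 0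

/-- Ω₊ together with the interface: (−1,1) × [0,1). -/
def sqPc : Set (ℝ × ℝ) := Ioo (-1 : ℝ) 1 ×ˢ Ico (0 : ℝ) 1

/-- Ω₋ together with the interface: (−1,1) × (−1,0]. -/
def sqMc : Set (ℝ × ℝ) := Ioo (-1 : ℝ) 1 ×ˢ Ioc (-1 : ℝ) 0

open AffineMap in
/-- Stokes' formula on a triangle `a b c` inside a convex set `s`, for a 1-form which is continuous
on `s` but closed only in the interior of `s`. The vertex `a` is interior, while `b` and `c` may lie
on the boundary. -/
lemma segment_integral_add {E : Type*} [NormedAddCommGroup E] [NormedSpace ℝ E]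
    {s : Set E} {ω : E → E →L[ℝ] ℝ} {dω : E → E →L[ℝ] E →L[ℝ] ℝ} {a b c : E}
    (hs : Convex ℝ s) (hωc : ContinuousOn ω s)
    (hω : ∀ x ∈ interior s, HasFDerivAt ω (dω x) x)
    (hdω : ∀ x ∈ interior s, ∀ u v, dω x u v = dω x v u)
    (ha : a ∈ interior s) (hb : b ∈ s) (hc : c ∈ s) :
    (∫ᶜ x in .segment a b, ω x) + ∫ᶜ x in .segment b c, ω x = ∫ᶜ x in .segment a c, ω x := by
  set φ := ContinuousMap.Homotopy.affine
    (Path.segment a b : C(unitInterval, E)) (Path.segment a c) with hφ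
  have hφs : range φ ⊆ s := by
    rw [range_subset_iff]
    intro x
    simp [φ, interior_subset ha, hb, hc, hs.lineMap_mem]
  have hint : ∀ d ∈ s, ∀ y : unitInterval, y ∈ Ioo (0 : unitInterval) 1 →
      lineMap a d (y : ℝ) ∈ interior s := by
    intro d hd y hy
    refine hs.openSegment_interior_self_subset_interior ha hd ?_
    rw [openSegment_eq_image_lineMap]
    exact ⟨y, ⟨hy.1, hy.2⟩, rfl⟩
  have := φ.curveIntegral_add_curveIntegral_eq_of_hasFDerivWithinAt
    (t := range φ ∩ interior s) (ω := ω) (dω := dω) ?_ ?_ ?_ ?_ ?_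
  · convert! this using 2
    · dsimp [φ]
      rw [← Path.cast_segment (Path.segment a b).target (Path.segment a c).target, curveIntegral_cast]
    · dsimp [φ]
      rw [← Path.cast_segment (Path.segment a b).source (Path.segment a c).source]
      simp
  · intro x hx y hy
    refine ⟨mem_range_self _, ?_⟩
    have := hs.interior.lineMap_mem (hint b hb y hy) (hint c hc y hy) x.2
    simpa [φ] using this
  · exact fun x hx ↦ (hω x hx.2).hasFDerivWithinAt
  · refine hωc.mono (subset_trans ?_ hφs)
    exact closure_minimal inter_subset_left (isCompact_range <| map_continuous _).isClosed
  · exact fun x hx u _ v _ ↦ hdω x hx.2 u v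
  · have : EqOn (fun x : ℝ × ℝ ↦ IccExtend zero_le_one (φ.extend x.1) x.2)
        (fun x ↦ lineMap (lineMap a b x.2) (lineMap a c x.2) x.1) (Icc 0 1) := by
      rw [Icc_prod_eq]
      rintro ⟨x, y⟩ ⟨hx, hy⟩
      lift x to unitInterval using hx
      lift y to unitInterval using hy
      simp [φ]
    exact .congr (by fun_prop) this

/-- Poincaré lemma up to the boundary of a convex set: closedness is only needed in the interior,
but the primitive is differentiable within the whole set. -/
lemma hasFDerivWithinAt_segment_primitive {E : Type*} [NormedAddCommGroup E] [NormedSpace ℝ E]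
    {s : Set E} {ω : E → E →L[ℝ] ℝ} {dω : E → E →L[ℝ] E →L[ℝ] ℝ} {a b : E}
    (hs : Convex ℝ s) (hωc : ContinuousOn ω s)
    (hω : ∀ x ∈ interior s, HasFDerivAt ω (dω x) x)
    (hdω : ∀ x ∈ interior s, ∀ u v, dω x u v = dω x v u)
    (ha : a ∈ interior s) (hb : b ∈ s) :
    HasFDerivWithinAt (fun y ↦ ∫ᶜ x in .segment a y, ω x) (ω b) s b := by
  suffices HasFDerivWithinAt
      (fun y ↦ ∫ᶜ x in .segment a b, ω x + ∫ᶜ x in .segment b y, ω x) (ω b) s b from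
    this.congr' (fun _ h ↦ (segment_integral_add hs hωc hω hdω ha hb h).symm) hb
  exact .const_add _ (HasFDerivWithinAt.curveIntegral_segment_source hs hωc hb)

/-- The linear form `v ↦ p₁ v₂ - p₂ v₁`, depending linearly on `p`; composed with a vector field
`F` it is the 1-form `F₁ dx₂ - F₂ dx₁`. -/
noncomputable def rotForm : (ℝ × ℝ) →L[ℝ] (ℝ × ℝ) →L[ℝ] ℝ :=
  (ContinuousLinearMap.fst ℝ ℝ ℝ).smulRight (ContinuousLinearMap.snd ℝ ℝ ℝ) -
    (ContinuousLinearMap.snd ℝ ℝ ℝ).smulRight (ContinuousLinearMap.fst ℝ ℝ ℝ)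

lemma rotForm_apply (p v : ℝ × ℝ) : rotForm p v = p.1 * v.2 - p.2 * v.1 := by
  simp [rotForm]

lemma div2_eq {F : ℝ × ℝ → ℝ × ℝ} {x : ℝ × ℝ} (hF : DifferentiableAt ℝ F x) :
    div2 F x = (fderiv ℝ F x (1, 0)).1 + (fderiv ℝ F x (0, 1)).2 := by
  have h1 := hF.hasFDerivAt.fst.fderiv
  have h2 := hF.hasFDerivAt.snd.fderiv
  simp [div2, pd1, pd2, h1, h2]

/-- The derivative of `F₁ dx₂ - F₂ dx₁` is symmetric because the trace of `DF` is `div F`. -/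
lemma rotForm_symm (L : (ℝ × ℝ) →L[ℝ] ℝ × ℝ) (hL : (L (1, 0)).1 + (L (0, 1)).2 = 0)
    (u v : ℝ × ℝ) : rotForm (L u) v = rotForm (L v) u := by
  have key : ∀ w : ℝ × ℝ, L w = w.1 • L (1, 0) + w.2 • L (0, 1) := by
    intro w
    rw [← map_smul, ← map_smul, ← map_add]
    simp
  rw [key u, key v, rotForm_apply, rotForm_apply]
  simp only [Prod.fst_add, Prod.snd_add, Prod.smul_fst, Prod.smul_snd, smul_eq_mul]
  linear_combination (u.1 * v.2 - u.2 * v.1) * hL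

lemma exists_potential {F : ℝ × ℝ → ℝ × ℝ} {s : Set (ℝ × ℝ)} (hs : Convex ℝ s)
    (hne : (interior s).Nonempty) (hFc : ContinuousOn F s)
    (hF : ContDiffOn ℝ 1 F (interior s)) (hdiv : ∀ x ∈ interior s, div2 F x = 0) :
    ∃ f : ℝ × ℝ → ℝ, ∀ x ∈ s, HasFDerivWithinAt f (rotForm (F x)) s x := by
  obtain ⟨a, ha⟩ := hne
  have hd : ∀ x ∈ interior s, DifferentiableAt ℝ F x := fun x hx ↦
    (hF.differentiableOn one_ne_zero).differentiableAt (isOpen_interior.mem_nhds hx)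
  refine ⟨_, fun x hx ↦ hasFDerivWithinAt_segment_primitive (ω := fun x ↦ rotForm (F x))
    (dω := fun x ↦ rotForm ∘L fderiv ℝ F x) hs
    (rotForm.continuous.comp_continuousOn hFc) (fun y hy ↦ ?_) (fun y hy u v ↦ ?_) ha hx⟩
  · exact rotForm.hasFDerivAt.comp y (hd y hy).hasFDerivAt
  · exact rotForm_symm _ (by rw [← div2_eq (hd y hy), hdiv y hy]) u v

lemma scurl_eq {f : ℝ × ℝ → ℝ} {p x : ℝ × ℝ} (h : HasFDerivAt f (rotForm p) x) :
    scurl f x = p := by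
  simp [scurl, pd1, pd2, h.fderiv, rotForm_apply]

/-- A vector field that is piecewise divergence-free on the two sides of the straight
interface Γ₀ = (−1,1)×{0} and whose normal component is continuous across the interface
admits a globally continuous scalar potential whose curl equals the field on each
subdomain. -/
theorem interface_curl_potential
    (Fp Fm : ℝ × ℝ → ℝ × ℝ)
    (hFpc : ContinuousOn Fp sqPc)
    (hFp : ContDiffOn ℝ 1 Fp sqP)
    (hdivp : ∀ x ∈ sqP, div2 Fp x = 0)
    (hFmc : ContinuousOn Fm sqMc)
    (hFm : ContDiffOn ℝ 1 Fm sqM)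
    (hdivm : ∀ x ∈ sqM, div2 Fm x = 0)
    (hmatch : ∀ x₁ ∈ Ioo (-1 : ℝ) 1, (Fp (x₁, 0)).2 = (Fm (x₁, 0)).2) :
    ∃ φ : ℝ × ℝ → ℝ,
      ContinuousOn φ sqAll ∧
      (∀ x ∈ sqP ∪ sqM, DifferentiableAt ℝ φ x) ∧
      (∀ x ∈ sqP, scurl φ x = Fp x) ∧
      (∀ x ∈ sqM, scurl φ x = Fm x) := by
  have hiP : interior sqPc = sqP := by simp [sqPc, sqP, interior_prod_eq]
  have hiM : interior sqMc = sqM := by simp [sqMc, sqM, interior_prod_eq]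
  have hoP : IsOpen sqP := hiP ▸ isOpen_interior
  have hoM : IsOpen sqM := hiM ▸ isOpen_interior
  obtain ⟨f, hf⟩ := exists_potential (F := Fp) (s := sqPc)
    ((convex_Ioo _ _).prod (convex_Ico _ _))
    ⟨(0, 1 / 2), by rw [hiP]; constructor <;> constructor <;> norm_num⟩ hFpc
    (hiP ▸ hFp) (hiP ▸ hdivp)
  obtain ⟨g, hg⟩ := exists_potential (F := Fm) (s := sqMc)
    ((convex_Ioo _ _).prod (convex_Ioc _ _))
    ⟨(0, -1 / 2), by rw [hiM]; constructor <;> constructor <;> norm_num⟩ hFmc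
    (hiM ▸ hFm) (hiM ▸ hdivm)
  have hΓP : ∀ t ∈ Ioo (-1 : ℝ) 1, (t, (0 : ℝ)) ∈ sqPc := fun t ht ↦ ⟨ht, by norm_num⟩
  have hΓM : ∀ t ∈ Ioo (-1 : ℝ) 1, (t, (0 : ℝ)) ∈ sqMc := fun t ht ↦ ⟨ht, by norm_num⟩
  -- The two potentials have the same tangential derivative along the interface.
  have hderiv : ∀ t ∈ Ioo (-1 : ℝ) 1, HasDerivAt (fun t ↦ f (t, 0) - g (t, 0)) 0 t := by
    intro t ht
    have hγ : HasDerivWithinAt (fun t : ℝ ↦ (t, (0 : ℝ))) (1, 0) (Ioo (-1) 1) t :=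
      (hasDerivWithinAt_id _ _).prodMk (hasDerivWithinAt_const _ _ _)
    have h1 := (hf _ (hΓP t ht)).comp_hasDerivWithinAt t hγ hΓP
    have h2 := (hg _ (hΓM t ht)).comp_hasDerivWithinAt t hγ hΓM
    have h3 := (h1.sub h2).hasDerivAt (isOpen_Ioo.mem_nhds ht)
    exact h3.congr_deriv (by simp [rotForm_apply, hmatch t ht])
  obtain ⟨c, hc⟩ : ∃ c, ∀ t ∈ Ioo (-1 : ℝ) 1, f (t, 0) - g (t, 0) = c :=
    isOpen_Ioo.exists_is_const_of_deriv_eq_zero isPreconnected_Ioo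
      (fun t ht ↦ (hderiv t ht).differentiableAt.differentiableWithinAt)
      (fun t ht ↦ (hderiv t ht).deriv)
  set φ : ℝ × ℝ → ℝ := fun x ↦ if 0 ≤ x.2 then f x else g x + c with hφ
  have hdP : ∀ x ∈ sqP, HasFDerivAt φ (rotForm (Fp x)) x := by
    intro x hx
    have hfx := (hf x (interior_subset (hiP ▸ hx))).hasFDerivAt
      (mem_interior_iff_mem_nhds.1 (hiP ▸ hx))
    refine hfx.congr_of_eventuallyEq ?_
    filter_upwards [hoP.mem_nhds hx] with y hy
    simp [hφ, hy.2.1.le]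
  have hdM : ∀ x ∈ sqM, HasFDerivAt φ (rotForm (Fm x)) x := by
    intro x hx
    have hgx := (hg x (interior_subset (hiM ▸ hx))).hasFDerivAt
      (mem_interior_iff_mem_nhds.1 (hiM ▸ hx))
    refine (hgx.add_const c).congr_of_eventuallyEq ?_
    filter_upwards [hoM.mem_nhds hx] with y hy
    simp [hφ, not_le.2 hy.2.2]
  refine ⟨φ, ?_, ?_, fun x hx ↦ scurl_eq (hdP x hx), fun x hx ↦ scurl_eq (hdM x hx)⟩
  · refine ContinuousOn.if ?_ ?_ ?_
    · rintro ⟨t, y⟩ ⟨hx, hfr⟩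
      have h0 : 0 = y := frontier_le_subset_eq continuous_const continuous_snd hfr
      subst h0
      linarith [hc t hx.1]
    · refine ContinuousOn.mono (fun x hx ↦ (hf x hx).continuousWithinAt) ?_
      rintro x ⟨hx, hcl⟩
      rw [(isClosed_le continuous_const continuous_snd).closure_eq] at hcl
      exact ⟨hx.1, hcl, hx.2.2⟩
    · refine ContinuousOn.mono
        (fun x hx ↦ ((hg x hx).continuousWithinAt.add continuousWithinAt_const)) ?_
      rintro x ⟨hx, hcl⟩
      have hle : x.2 ≤ 0 := by
        refine closure_minimal (t := {x : ℝ × ℝ | x.2 ≤ 0}) (fun y hy ↦ ?_)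
          (isClosed_le continuous_snd continuous_const) hcl
        exact (not_le.1 hy).le
      exact ⟨hx.1, hx.2.1, hle⟩
  · rintro x (hx | hx)
    · exact (hdP x hx).differentiableAt
    · exact (hdM x hx).differentiableAt
end

section
/- Let Ω = (−1,1) × (−1,1) ⊆ ℝ², Ω₊ = (−1,1) × (0,1), Ω₋ = (−1,1) × (−1,0), and Γ₀ = (−1,1) × {0}. Let A₊, A₋ be continuously differentiable maps into symmetric 2×2 real matrices, defined on (−1,1) × [0,1) and (−1,1) × (−1,0] respectively, and uniformly elliptic: there exist 0 < λ ≤ Λ with λ|ξ|² ≤ ⟨A_±(x)ξ, ξ⟩ ≤ Λ|ξ|² for all relevant x and all ξ ∈ ℝ². Let u, ũ : Ω → ℝ be such that the restrictions of u and ũ to Ω₊ are twice continuously differentiable with gradients extending continuously to (−1,1) × [0,1), and likewise on Ω₋ with gradients extending continuously to (−1,1) × (−1,0]. Assume: (a) div(A₊²∇u) = div(A₊²∇ũ) on Ω₊ and div(A₋²∇u) = div(A₋²∇ũ) on Ω₋; and (b) the normal-flux jumps of u and ũ across Γ₀ coincide: for every x₁ ∈ (−1,1), (A₊²∇u − A₋²∇u)·e₂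 = (A₊²∇ũ − A₋²∇ũ)·e₂ at (x₁, 0) (using the continuous boundary extensions from each side). Then: (i) there exists φ : Ω → ℝ continuous on Ω, differentiable at every point of Ω₊ ∪ Ω₋, with A_±(x)²(∇u(x) − ∇ũ(x)) = curl φ(x) for all x ∈ Ω_±; and (ii) for every differentiable u_c : Ω₊ ∪ Ω₋ → ℝ with ∇u_c(x) = ∇ũ(x) + A_±(x)^{-2} curl φ(x) on Ω_±, there exist constants C₊, C₋ ∈ ℝ such that u_c = u + C₊ on Ω₊ and u_c = u + C₋ on Ω₋. -/
/-!
The difference flux `F = A²(∇u - ∇ũ)` is divergence free on each half of the square, and its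
normal component `F₂` is continuous across the interface. Integrating `F₁` vertically from the
interface and `F₂` along it gives on each half a potential `fluxPot F`. Path independence comes
from the divergence theorem on rectangles with one side on the interface, which needs continuity
of `F` up to that side but differentiability only inside (`fluxPot_eq_swap`); hence `fluxPot F`
is differentiable with `curl (fluxPot F) = F` inside and continuous up to the interface
(`fluxPot_box`). On the interface it equals `-∫ F₂`, which is the same from both sides, so the
two potentials glue to a continuous function.

Conversely, `A²` is invertible by coercivity, so the equation for `u_c` says `∇u_c = ∇u` on each
half, which is connected (`exists_const_of_reconstruction`).
-/


open MeasureTheory Set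

/-- Euclidean dot product on ℝ². -/
def dot2 (a b : ℝ × ℝ) : ℝ := a.1 * b.1 + a.2 * b.2

/-- Matrix-vector multiplication of a 2×2 real matrix with a vector in ℝ². -/
def mvMul (M : Matrix (Fin 2) (Fin 2) ℝ) (p : ℝ × ℝ) : ℝ × ℝ :=
  (M 0 0 * p.1 + M 0 1 * p.2, M 1 0 * p.1 + M 1 1 * p.2)

/-! ### The potential of a divergence-free field on a box -/

/-- The candidate potential of a planar field `F`: integrate `curl φ = F` from the origin to
`(x₁, 0)` along the horizontal axis, then vertically up or down to `(x₁, x₂)`. -/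
noncomputable def fluxPot (F : ℝ × ℝ → ℝ × ℝ) (x : ℝ × ℝ) : ℝ :=
  (∫ s in (0 : ℝ)..x.2, (F (x.1, s)).1) - ∫ t in (0 : ℝ)..x.1, (F (t, 0)).2

theorem continuous_fluxPot {G : ℝ × ℝ → ℝ × ℝ} (hG : Continuous G) :
    Continuous (fluxPot G) := by
  unfold fluxPot
  refine Continuous.sub ?_ ?_
  · exact intervalIntegral.continuous_parametric_intervalIntegral_of_continuous
      (f := fun (x : ℝ × ℝ) s => (G (x.1, s)).1) (by unfold Function.uncurry; fun_prop)
      continuous_snd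
  · exact intervalIntegral.continuous_parametric_intervalIntegral_of_continuous
      (f := fun (_ : ℝ × ℝ) t => (G (t, 0)).2) (by unfold Function.uncurry; fun_prop)
      continuous_fst

theorem div2_congr {F G : ℝ × ℝ → ℝ × ℝ} {x : ℝ × ℝ} (h : F =ᶠ[nhds x] G) :
    div2 F x = div2 G x := by
  have h1 : (fun y => (F y).1) =ᶠ[nhds x] fun y => (G y).1 := h.fun_comp Prod.fst
  have h2 : (fun y => (F y).2) =ᶠ[nhds x] fun y => (G y).2 := h.fun_comp Prod.snd
  unfold div2 pd1 pd2
  rw [h1.fderiv_eq, h2.fderiv_eq]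

/-- Path independence: for a field that is continuous on the plane and divergence free in the
open box, the potential may also be computed along the path that first follows the vertical
axis. This is the divergence theorem on the rectangle with opposite corners `0` and `x`, which
may touch the boundary of the box. -/
theorem fluxPot_eq_swap {G : ℝ × ℝ → ℝ × ℝ} (hG : Continuous G) {a b c d : ℝ}
    (ha : a ≤ 0) (hb : 0 ≤ b) (hc : c ≤ 0) (hd : 0 ≤ d)
    (hdiff : ∀ x ∈ Ioo a b ×ˢ Ioo c d, DifferentiableAt ℝ G x)
    (hdiv : ∀ x ∈ Ioo a b ×ˢ Ioo c d, div2 G x = 0)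
    {x : ℝ × ℝ} (hx : x ∈ Icc a b ×ˢ Icc c d) :
    fluxPot G x = (∫ s in (0 : ℝ)..x.2, (G (0, s)).1) - ∫ t in (0 : ℝ)..x.1, (G (t, x.2)).2 := by
  obtain ⟨⟨h1, h2⟩, h3, h4⟩ := hx
  have hsub : Ioo (min 0 x.1) (max 0 x.1) ×ˢ Ioo (min 0 x.2) (max 0 x.2)
      ⊆ Ioo a b ×ˢ Ioo c d :=
    prod_mono (Ioo_subset_Ioo (le_min ha h1) (max_le hb h2))
      (Ioo_subset_Ioo (le_min hc h3) (max_le hd h4))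
  -- The divergence vanishes only in the open box, so the derivatives handed to the divergence
  -- theorem are set to zero elsewhere.
  classical
  let f' : ℝ × ℝ → ℝ × ℝ →L[ℝ] ℝ := fun y =>
    if y ∈ Ioo a b ×ˢ Ioo c d then fderiv ℝ (fun y => (G y).1) y else 0
  let g' : ℝ × ℝ → ℝ × ℝ →L[ℝ] ℝ := fun y =>
    if y ∈ Ioo a b ×ˢ Ioo c d then fderiv ℝ (fun y => (G y).2) y else 0
  have hz : ∀ y, f' y (1, 0) + g' y (0, 1) = 0 := by
    intro y
    by_cases hy : y ∈ Ioo a b ×ˢ Ioo c d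
    · simp only [f', g', if_pos hy]; exact hdiv y hy
    · simp only [f', g', if_neg hy]; simp
  have key := integral2_divergence_prod_of_hasFDerivAt (fun y => (G y).1) (fun y => (G y).2)
    f' g' 0 0 x.1 x.2 (by fun_prop) (by fun_prop)
    (fun y hy => by
      simp only [f', if_pos (hsub hy)]
      exact (hdiff y (hsub hy)).fst.hasFDerivAt)
    (fun y hy => by
      simp only [g', if_pos (hsub hy)]
      exact (hdiff y (hsub hy)).snd.hasFDerivAt)
    (by simp only [hz]; exact integrableOn_zero)
  simp only [hz, intervalIntegral.integral_zero] at key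
  unfold fluxPot
  linarith

/-- Inside the box, `fluxPot` has gradient `(-G₂, G₁)`: the second partial derivative is read off
the definition, the first off `fluxPot_eq_swap`, and both are continuous. -/
theorem hasFDerivAt_fluxPot {G : ℝ × ℝ → ℝ × ℝ} (hG : Continuous G) {a b c d : ℝ}
    (ha : a ≤ 0) (hb : 0 ≤ b) (hc : c ≤ 0) (hd : 0 ≤ d)
    (hdiff : ∀ x ∈ Ioo a b ×ˢ Ioo c d, DifferentiableAt ℝ G x)
    (hdiv : ∀ x ∈ Ioo a b ×ˢ Ioo c d, div2 G x = 0)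
    {x : ℝ × ℝ} (hx : x ∈ Ioo a b ×ˢ Ioo c d) :
    HasFDerivAt (fluxPot G)
      ((ContinuousLinearMap.toSpanSingleton ℝ (-(G x).2)).coprod
        (ContinuousLinearMap.toSpanSingleton ℝ (G x).1)) x := by
  have hnhds : ∀ᶠ v in nhds x, v ∈ Ioo a b ×ˢ Ioo c d :=
    (isOpen_Ioo.prod isOpen_Ioo).mem_nhds hx
  refine (hasStrictFDerivAt_uncurry_coprod (u := x) (f := fun p q => fluxPot G (p, q))
    (f₁ := fun p q => ContinuousLinearMap.toSpanSingleton ℝ (-(G (p, q)).2))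
    (f₂ := fun p q => ContinuousLinearMap.toSpanSingleton ℝ (G (p, q)).1)
    ?_ ?_ ?_ ?_).hasFDerivAt
  · filter_upwards [hnhds] with v hv
    have hd1 : HasDerivAt (fun p => (∫ s in (0 : ℝ)..v.2, (G (0, s)).1)
        - ∫ t in (0 : ℝ)..p, (G (t, v.2)).2) (-(G (v.1, v.2)).2) v.1 := by
      have hcont : Continuous fun t => (G (t, v.2)).2 := by fun_prop
      exact (intervalIntegral.integral_hasDerivAt_right (hcont.intervalIntegrable _ _)
        (hcont.stronglyMeasurableAtFilter _ _) hcont.continuousAt).const_sub _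
    refine (hd1.congr_of_eventuallyEq ?_).hasFDerivAt
    filter_upwards [isOpen_Ioo.mem_nhds hv.1] with p hp
    exact fluxPot_eq_swap hG ha hb hc hd hdiff hdiv (x := (p, v.2))
      ⟨Ioo_subset_Icc_self hp, Ioo_subset_Icc_self hv.2⟩
  · filter_upwards with v
    have hcont : Continuous fun s => (G (v.1, s)).1 := by fun_prop
    have hd2 : HasDerivAt (fun q => (∫ s in (0 : ℝ)..q, (G (v.1, s)).1)
        - ∫ t in (0 : ℝ)..v.1, (G (t, 0)).2) (G (v.1, v.2)).1 v.2 :=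
      (intervalIntegral.integral_hasDerivAt_right (hcont.intervalIntegrable _ _)
        (hcont.stronglyMeasurableAtFilter _ _) hcont.continuousAt).sub_const _
    exact hd2.hasFDerivAt
  · refine Continuous.continuousAt ?_
    exact (ContinuousLinearMap.toSpanSingletonCLE (𝕜 := ℝ) (E := ℝ)).continuous.comp
      (show Continuous fun y : ℝ × ℝ => -(G y).2 by fun_prop)
  · refine Continuous.continuousAt ?_
    exact (ContinuousLinearMap.toSpanSingletonCLE (𝕜 := ℝ) (E := ℝ)).continuous.comp
      (show Continuous fun y : ℝ × ℝ => (G y).1 by fun_prop)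

/-- Poincaré lemma on a closed box containing the origin, possibly on its boundary: a field that
is continuous on the closed box and divergence free inside is the curl of a potential that is
continuous up to the boundary. -/
theorem fluxPot_box {F : ℝ × ℝ → ℝ × ℝ} {a b c d : ℝ}
    (ha : a ≤ 0) (hb : 0 ≤ b) (hc : c ≤ 0) (hd : 0 ≤ d)
    (hF : ContinuousOn F (Icc a b ×ˢ Icc c d))
    (hdiff : ∀ x ∈ Ioo a b ×ˢ Ioo c d, DifferentiableAt ℝ F x)
    (hdiv : ∀ x ∈ Ioo a b ×ˢ Ioo c d, div2 F x = 0) :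
    ContinuousOn (fluxPot F) (Icc a b ×ˢ Icc c d) ∧
    ∀ x ∈ Ioo a b ×ˢ Ioo c d, DifferentiableAt ℝ (fluxPot F) x ∧ scurl (fluxPot F) x = F x := by
  -- Replace `F` by a continuous field on the whole plane, by composing with the projection
  -- onto the box.
  obtain ⟨G, hG, hGF⟩ : ∃ G : ℝ × ℝ → ℝ × ℝ, Continuous G ∧
      ∀ x ∈ Icc a b ×ˢ Icc c d, F x = G x := by
    refine ⟨fun x => F (projIcc a b (ha.trans hb) x.1, projIcc c d (hc.trans hd) x.2),
      ?_, ?_⟩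
    · exact hF.comp_continuous (by fun_prop)
        fun x => ⟨(projIcc a b (ha.trans hb) x.1).2, (projIcc c d (hc.trans hd) x.2).2⟩
    · rintro x ⟨h1, h2⟩
      simp only [projIcc_of_mem _ h1, projIcc_of_mem _ h2]
  have hopen : IsOpen (Ioo a b ×ˢ Ioo c d) := isOpen_Ioo.prod isOpen_Ioo
  have hsub : Ioo a b ×ˢ Ioo c d ⊆ Icc a b ×ˢ Icc c d :=
    prod_mono Ioo_subset_Icc_self Ioo_subset_Icc_self
  have hev : ∀ x ∈ Ioo a b ×ˢ Ioo c d, F =ᶠ[nhds x] G := fun x hx => by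
    filter_upwards [hopen.mem_nhds hx] with y hy using hGF y (hsub hy)
  have hpot : ∀ x ∈ Icc a b ×ˢ Icc c d, fluxPot F x = fluxPot G x := by
    rintro x ⟨h1, h2⟩
    unfold fluxPot
    congr 1
    · refine intervalIntegral.integral_congr fun s hs => ?_
      simp only [hGF (x.1, s) ⟨h1, uIcc_subset_Icc ⟨hc, hd⟩ h2 hs⟩]
    · refine intervalIntegral.integral_congr fun t ht => ?_
      simp only [hGF (t, 0) ⟨uIcc_subset_Icc ⟨ha, hb⟩ h1 ht, hc, hd⟩]
  have hGdiff : ∀ x ∈ Ioo a b ×ˢ Ioo c d, DifferentiableAt ℝ G x := fun x hx =>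
    (hdiff x hx).congr_of_eventuallyEq (hev x hx).symm
  have hGdiv : ∀ x ∈ Ioo a b ×ˢ Ioo c d, div2 G x = 0 := fun x hx => by
    rw [← hdiv x hx, div2_congr (hev x hx)]
  refine ⟨(continuous_fluxPot hG).continuousOn.congr hpot, fun x hx => ?_⟩
  have hder := (hasFDerivAt_fluxPot hG ha hb hc hd hGdiff hGdiv hx).congr_of_eventuallyEq
    (f₁ := fluxPot F)
    (by filter_upwards [hopen.mem_nhds hx] with y hy using hpot y (hsub hy))
  refine ⟨hder.differentiableAt, ?_⟩
  unfold scurl pd1 pd2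
  rw [hder.fderiv, hGF x (hsub hx)]
  simp

/-! ### The difference flux -/

theorem differentiableAt_grad2 {U : Set (ℝ × ℝ)} (hU : IsOpen U) {u : ℝ × ℝ → ℝ}
    (hu : ContDiffOn ℝ 2 u U) {x : ℝ × ℝ} (hx : x ∈ U) : DifferentiableAt ℝ (grad2 u) x := by
  have h : DifferentiableAt ℝ (fderiv ℝ u) x :=
    ((hu.contDiffAt (hU.mem_nhds hx)).fderiv_right (m := 1) (by norm_num)).differentiableAt
      (by norm_num)
  unfold grad2 pd1 pd2
  exact (h.clm_apply (differentiableAt_const _)).prodMk (h.clm_apply (differentiableAt_const _))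

theorem DifferentiableAt.mvMul_sq {A : ℝ × ℝ → Matrix (Fin 2) (Fin 2) ℝ} {V : ℝ × ℝ → ℝ × ℝ}
    {x : ℝ × ℝ} (hA : ∀ i j, DifferentiableAt ℝ (fun y => A y i j) x)
    (hV : DifferentiableAt ℝ V x) :
    DifferentiableAt ℝ (fun y => mvMul (A y * A y) (V y)) x := by
  have hAA : ∀ i j, DifferentiableAt ℝ (fun y => (A y * A y) i j) x := fun i j => by
    simp only [Matrix.mul_apply, Fin.sum_univ_two]
    exact ((hA _ _).mul (hA _ _)).add ((hA _ _).mul (hA _ _))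
  unfold mvMul
  exact (((hAA 0 0).mul hV.fst).add ((hAA 0 1).mul hV.snd)).prodMk
    (((hAA 1 0).mul hV.fst).add ((hAA 1 1).mul hV.snd))

theorem ContinuousOn.mvMul_sq {A : ℝ × ℝ → Matrix (Fin 2) (Fin 2) ℝ} {V : ℝ × ℝ → ℝ × ℝ}
    {s : Set (ℝ × ℝ)} (hA : ∀ i j, ContinuousOn (fun y => A y i j) s)
    (hV : ContinuousOn V s) :
    ContinuousOn (fun y => mvMul (A y * A y) (V y)) s := by
  have hAA : ∀ i j, ContinuousOn (fun y => (A y * A y) i j) s := fun i j => by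
    simp only [Matrix.mul_apply, Fin.sum_univ_two]
    exact ((hA _ _).mul (hA _ _)).add ((hA _ _).mul (hA _ _))
  unfold mvMul
  exact (((hAA 0 0).mul hV.fst).add ((hAA 0 1).mul hV.snd)).prodMk
    (((hAA 1 0).mul hV.fst).add ((hAA 1 1).mul hV.snd))

theorem mvMul_sub (M : Matrix (Fin 2) (Fin 2) ℝ) (p q : ℝ × ℝ) :
    mvMul M (p - q) = mvMul M p - mvMul M q := by
  ext <;> simp [mvMul] <;> ring

theorem div2_sub {F G : ℝ × ℝ → ℝ × ℝ} {x : ℝ × ℝ} (hF : DifferentiableAt ℝ F x)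
    (hG : DifferentiableAt ℝ G x) : div2 (fun y => F y - G y) x = div2 F x - div2 G x := by
  unfold div2 pd1 pd2
  simp only [Prod.fst_sub, Prod.snd_sub]
  rw [fderiv_fun_sub hF.fst hG.fst, fderiv_fun_sub hF.snd hG.snd]
  simp only [sub_apply]
  ring

/-- The difference flux `A²(∇u - ∇ũ)`, written with any representatives `G`, `Gt` of the two
gradients, is differentiable and divergence free. -/
theorem flux_div_free {U : Set (ℝ × ℝ)} (hU : IsOpen U)
    {A : ℝ × ℝ → Matrix (Fin 2) (Fin 2) ℝ} (hA : ∀ i j, ContDiffOn ℝ 1 (fun x => A x i j) U)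
    {u ut : ℝ × ℝ → ℝ} (hu : ContDiffOn ℝ 2 u U) (hut : ContDiffOn ℝ 2 ut U)
    {G Gt : ℝ × ℝ → ℝ × ℝ} (hG : ∀ x ∈ U, G x = grad2 u x) (hGt : ∀ x ∈ U, Gt x = grad2 ut x)
    (h : ∀ x ∈ U, div2 (fun y => mvMul (A y * A y) (grad2 u y)) x =
      div2 (fun y => mvMul (A y * A y) (grad2 ut y)) x) {x : ℝ × ℝ} (hx : x ∈ U) :
    DifferentiableAt ℝ (fun y => mvMul (A y * A y) (G y - Gt y)) x ∧
    div2 (fun y => mvMul (A y * A y) (G y - Gt y)) x = 0 := by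
  have hAd : ∀ i j, DifferentiableAt ℝ (fun y => A y i j) x := fun i j =>
    ((hA i j).contDiffAt (hU.mem_nhds hx)).differentiableAt (by norm_num)
  have h1 := DifferentiableAt.mvMul_sq hAd (differentiableAt_grad2 hU hu hx)
  have h2 := DifferentiableAt.mvMul_sq hAd (differentiableAt_grad2 hU hut hx)
  have hev : (fun y => mvMul (A y * A y) (G y - Gt y)) =ᶠ[nhds x]
      fun y => mvMul (A y * A y) (grad2 u y) - mvMul (A y * A y) (grad2 ut y) := by
    filter_upwards [hU.mem_nhds hx] with y hy
    rw [hG y hy, hGt y hy, mvMul_sub]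
  refine ⟨(h1.sub h2).congr_of_eventuallyEq hev, ?_⟩
  have h3 := div2_sub h1 h2
  rw [h x hx, sub_self] at h3
  rw [← h3, div2_congr hev]

/-! ### Recovering the gradient -/

/-- Coercivity makes `A`, hence `A²`, invertible. -/
theorem mvMul_inv_sq_cancel {M : Matrix (Fin 2) (Fin 2) ℝ} {lam : ℝ} (hlam : 0 < lam)
    (h : ∀ ξ : ℝ × ℝ, lam * dot2 ξ ξ ≤ dot2 (mvMul M ξ) ξ) (p : ℝ × ℝ) :
    mvMul (M * M)⁻¹ (mvMul (M * M) p) = p := by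
  have hdet : M.det ≠ 0 := by
    intro h0
    obtain ⟨v, hv, hMv⟩ := Matrix.exists_mulVec_eq_zero_iff.mpr h0
    apply hv
    have e0 := congrFun hMv 0
    have e1 := congrFun hMv 1
    simp only [Matrix.mulVec, dotProduct, Fin.sum_univ_two, Pi.zero_apply] at e0 e1
    have hh := h (v 0, v 1)
    simp only [dot2, mvMul, e0, e1] at hh
    have hs : v 0 * v 0 + v 1 * v 1 ≤ 0 := by
      by_contra! hpos
      nlinarith [mul_pos hlam hpos]
    ext i
    fin_cases i
    · simp; nlinarith [mul_self_nonneg (v 0), mul_self_nonneg (v 1)]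
    · simp; nlinarith [mul_self_nonneg (v 0), mul_self_nonneg (v 1)]
  have hunit : IsUnit (M * M).det := by
    rw [Matrix.det_mul]; exact (mul_ne_zero hdet hdet).isUnit
  have hinv := Matrix.nonsing_inv_mul _ hunit
  have e : ∀ i j, (((M * M)⁻¹ * (M * M)) : Matrix (Fin 2) (Fin 2) ℝ) i j
      = (1 : Matrix (Fin 2) (Fin 2) ℝ) i j := fun i j => by rw [hinv]
  have e00 := e 0 0
  have e01 := e 0 1
  have e10 := e 1 0
  have e11 := e 1 1
  generalize (M * M)⁻¹ = N at *
  generalize M * M = P at *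
  simp [Matrix.mul_apply, Fin.sum_univ_two] at e00 e01 e10 e11
  ext
  · simp only [mvMul]; linear_combination p.1 * e00 + p.2 * e01
  · simp only [mvMul]; linear_combination p.1 * e10 + p.2 * e11

/-- On a connected open set where `A` is coercive, the relation between `∇u_c`, `∇ũ` and `curl φ`
reads `∇u_c = ∇u`. -/
theorem exists_const_of_reconstruction {U : Set (ℝ × ℝ)} (hU : IsOpen U) (hU' : IsPreconnected U)
    {A : ℝ × ℝ → Matrix (Fin 2) (Fin 2) ℝ} {lam : ℝ} (hlam : 0 < lam)
    (h : ∀ x ∈ U, ∀ ξ : ℝ × ℝ, lam * dot2 ξ ξ ≤ dot2 (mvMul (A x) ξ) ξ)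
    {u ut φ uc : ℝ × ℝ → ℝ} (hu : ContDiffOn ℝ 2 u U)
    (hφ : ∀ x ∈ U, mvMul (A x * A x) (grad2 u x - grad2 ut x) = scurl φ x)
    (huc : ∀ x ∈ U, DifferentiableAt ℝ uc x)
    (hgrad : ∀ x ∈ U, grad2 uc x = grad2 ut x + mvMul (A x * A x)⁻¹ (scurl φ x)) :
    ∃ C : ℝ, ∀ x ∈ U, uc x = u x + C := by
  refine hU.exists_eq_add_of_fderiv_eq hU' (fun x hx => (huc x hx).differentiableWithinAt)
    (hu.differentiableOn (by norm_num)) fun x hx => ?_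
  have hg := hgrad x hx
  rw [← hφ x hx, mvMul_inv_sq_cancel hlam (h x hx), add_sub_cancel] at hg
  simp only [grad2, pd1, pd2, Prod.mk.injEq] at hg
  ext
  · simpa using hg.1
  · simpa using hg.2

/-! ### Gluing across the interface -/

/-- Interface-problem reconstruction across the straight interface Γ₀ = (−1,1)×{0}:
if u and ũ satisfy the same piecewise elliptic interior equations div(A_±²∇u) =
div(A_±²∇ũ) on Ω₊ and Ω₋ and have the same normal-flux jump across Γ₀, then (i) there is
a globally continuous corrector potential φ, differentiable off the interface, with
A_±²(∇u − ∇ũ) = curl φ on each subdomain, and (ii) every differentiable u_c with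
∇u_c = ∇ũ + A_±⁻² curl φ on Ω_± coincides with u up to subdomain-wise constants.
Here `Gup`, `Gum`, `Gutp`, `Gutm` are the continuous extensions of ∇u and ∇ũ from Ω₊ and
Ω₋ to (−1,1)×[0,1) and (−1,1)×(−1,0] respectively. -/
theorem interface_reconstruction
    (Ap Am : ℝ × ℝ → Matrix (Fin 2) (Fin 2) ℝ)
    (hAp : ∀ i j, ContDiffOn ℝ 1 (fun x => Ap x i j) sqPc)
    (hAm : ∀ i j, ContDiffOn ℝ 1 (fun x => Am x i j) sqMc)
    (hApsymm : ∀ x ∈ sqPc, (Ap x).IsSymm)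
    (hAmsymm : ∀ x ∈ sqMc, (Am x).IsSymm)
    (lam Lam : ℝ) (hlam : 0 < lam) (hlamLam : lam ≤ Lam)
    (hellp : ∀ x ∈ sqPc, ∀ ξ : ℝ × ℝ,
      lam * dot2 ξ ξ ≤ dot2 (mvMul (Ap x) ξ) ξ ∧ dot2 (mvMul (Ap x) ξ) ξ ≤ Lam * dot2 ξ ξ)
    (hellm : ∀ x ∈ sqMc, ∀ ξ : ℝ × ℝ,
      lam * dot2 ξ ξ ≤ dot2 (mvMul (Am x) ξ) ξ ∧ dot2 (mvMul (Am x) ξ) ξ ≤ Lam * dot2 ξ ξ)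
    (u ut : ℝ × ℝ → ℝ)
    (hup : ContDiffOn ℝ 2 u sqP) (hum : ContDiffOn ℝ 2 u sqM)
    (hutp : ContDiffOn ℝ 2 ut sqP) (hutm : ContDiffOn ℝ 2 ut sqM)
    -- continuous extensions of the gradients of u and ũ up to the interface
    (Gup Gum Gutp Gutm : ℝ × ℝ → ℝ × ℝ)
    (hGup : ContinuousOn Gup sqPc) (hGupEq : ∀ x ∈ sqP, Gup x = grad2 u x)
    (hGum : ContinuousOn Gum sqMc) (hGumEq : ∀ x ∈ sqM, Gum x = grad2 u x)
    (hGutp : ContinuousOn Gutp sqPc) (hGutpEq : ∀ x ∈ sqP, Gutp x = grad2 ut x)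
    (hGutm : ContinuousOn Gutm sqMc) (hGutmEq : ∀ x ∈ sqM, Gutm x = grad2 ut x)
    -- (a) same interior equations on each subdomain
    (haP : ∀ x ∈ sqP, div2 (fun y => mvMul (Ap y * Ap y) (grad2 u y)) x =
                      div2 (fun y => mvMul (Ap y * Ap y) (grad2 ut y)) x)
    (haM : ∀ x ∈ sqM, div2 (fun y => mvMul (Am y * Am y) (grad2 u y)) x =
                      div2 (fun y => mvMul (Am y * Am y) (grad2 ut y)) x)
    -- (b) the normal-flux jumps of u and ũ across the interface coincide
    (hb : ∀ x₁ ∈ Ioo (-1 : ℝ) 1,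
      (mvMul (Ap (x₁, 0) * Ap (x₁, 0)) (Gup (x₁, 0))).2
        - (mvMul (Am (x₁, 0) * Am (x₁, 0)) (Gum (x₁, 0))).2
      = (mvMul (Ap (x₁, 0) * Ap (x₁, 0)) (Gutp (x₁, 0))).2
        - (mvMul (Am (x₁, 0) * Am (x₁, 0)) (Gutm (x₁, 0))).2) :
    (∃ φ : ℝ × ℝ → ℝ,
        ContinuousOn φ sqAll ∧
        (∀ x ∈ sqP ∪ sqM, DifferentiableAt ℝ φ x) ∧
        (∀ x ∈ sqP, mvMul (Ap x * Ap x) (grad2 u x - grad2 ut x) = scurl φ x) ∧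
        (∀ x ∈ sqM, mvMul (Am x * Am x) (grad2 u x - grad2 ut x) = scurl φ x)) ∧
    (∀ φ : ℝ × ℝ → ℝ,
      ContinuousOn φ sqAll →
      (∀ x ∈ sqP ∪ sqM, DifferentiableAt ℝ φ x) →
      (∀ x ∈ sqP, mvMul (Ap x * Ap x) (grad2 u x - grad2 ut x) = scurl φ x) →
      (∀ x ∈ sqM, mvMul (Am x * Am x) (grad2 u x - grad2 ut x) = scurl φ x) →
      ∀ uc : ℝ × ℝ → ℝ,
        (∀ x ∈ sqP ∪ sqM, DifferentiableAt ℝ uc x) →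
        (∀ x ∈ sqP, grad2 uc x = grad2 ut x + mvMul (Ap x * Ap x)⁻¹ (scurl φ x)) →
        (∀ x ∈ sqM, grad2 uc x = grad2 ut x + mvMul (Am x * Am x)⁻¹ (scurl φ x)) →
        ∃ Cp Cm : ℝ, (∀ x ∈ sqP, uc x = u x + Cp) ∧ (∀ x ∈ sqM, uc x = u x + Cm)) := by
  have hoP : IsOpen sqP := isOpen_Ioo.prod isOpen_Ioo
  have hoM : IsOpen sqM := isOpen_Ioo.prod isOpen_Ioo
  have hsP : sqP ⊆ sqPc := prod_mono subset_rfl Ioo_subset_Ico_self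
  have hsM : sqM ⊆ sqMc := prod_mono subset_rfl Ioo_subset_Ioc_self
  refine ⟨?_, ?_⟩
  · set Fp : ℝ × ℝ → ℝ × ℝ := fun y => mvMul (Ap y * Ap y) (Gup y - Gutp y) with hFp
    set Fm : ℝ × ℝ → ℝ × ℝ := fun y => mvMul (Am y * Am y) (Gum y - Gutm y) with hFm
    have hFpc : ContinuousOn Fp sqPc :=
      ContinuousOn.mvMul_sq (fun i j => (hAp i j).continuousOn) (hGup.sub hGutp)
    have hFmc : ContinuousOn Fm sqMc :=
      ContinuousOn.mvMul_sq (fun i j => (hAm i j).continuousOn) (hGum.sub hGutm)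
    have hFpd := fun x hx => flux_div_free hoP (fun i j => (hAp i j).mono hsP) hup hutp
      hGupEq hGutpEq haP (x := x) hx
    have hFmd := fun x hx => flux_div_free hoM (fun i j => (hAm i j).mono hsM) hum hutm
      hGumEq hGutmEq haM (x := x) hx
    have hboxP : ∀ r : ℝ, 0 < r → r < 1 → _ := fun r h0 h1 =>
      fluxPot_box (F := Fp) (a := -r) (b := r) (c := 0) (d := r) (by linarith) h0.le le_rfl h0.le
        (hFpc.mono (prod_mono (Icc_subset_Ioo (by linarith) h1) (Icc_subset_Ico_right h1)))
        (fun x hx => (hFpd x ⟨Ioo_subset_Ioo (by linarith) h1.le hx.1,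
          Ioo_subset_Ioo_right h1.le hx.2⟩).1)
        (fun x hx => (hFpd x ⟨Ioo_subset_Ioo (by linarith) h1.le hx.1,
          Ioo_subset_Ioo_right h1.le hx.2⟩).2)
    have hboxM : ∀ r : ℝ, 0 < r → r < 1 → _ := fun r h0 h1 =>
      fluxPot_box (F := Fm) (a := -r) (b := r) (c := -r) (d := 0) (by linarith) h0.le
        (by linarith) le_rfl
        (hFmc.mono (prod_mono (Icc_subset_Ioo (by linarith) h1)
          (Icc_subset_Ioc_left (by linarith))))
        (fun x hx => (hFmd x ⟨Ioo_subset_Ioo (by linarith) h1.le hx.1,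
          Ioo_subset_Ioo_left (by linarith) hx.2⟩).1)
        (fun x hx => (hFmd x ⟨Ioo_subset_Ioo (by linarith) h1.le hx.1,
          Ioo_subset_Ioo_left (by linarith) hx.2⟩).2)
    have hr : ∀ x ∈ sqAll, ∃ r : ℝ, 0 < r ∧ r < 1 ∧ x ∈ Ioo (-r) r ×ˢ Ioo (-r) r := by
      rintro x ⟨⟨h1, h2⟩, h3, h4⟩
      obtain ⟨r, hr1, hr2⟩ := exists_between (max_lt (abs_lt.2 ⟨h1, h2⟩) (abs_lt.2 ⟨h3, h4⟩))
      exact ⟨r, (abs_nonneg x.1).trans_lt ((le_max_left _ _).trans_lt hr1), hr2,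
        abs_lt.1 ((le_max_left _ _).trans_lt hr1), abs_lt.1 ((le_max_right _ _).trans_lt hr1)⟩
    have hPall : sqP ⊆ sqAll := prod_mono subset_rfl (Ioo_subset_Ioo_left (by norm_num))
    have hMall : sqM ⊆ sqAll := prod_mono subset_rfl (Ioo_subset_Ioo_right (by norm_num))
    -- The two potentials agree on the interface because the normal fluxes do.
    have htrace : ∀ t ∈ Ioo (-1 : ℝ) 1, fluxPot Fp (t, 0) = fluxPot Fm (t, 0) := by
      intro t ht
      unfold fluxPot
      simp only [intervalIntegral.integral_same]
      congr 1
      refine intervalIntegral.integral_congr fun s hs => ?_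
      have hs' : s ∈ Ioo (-1 : ℝ) 1 :=
        ordConnected_Ioo.uIcc_subset (by norm_num) ht hs
      have := hb s hs'
      simp only [hFp, hFm, mvMul_sub, Prod.snd_sub]
      linarith
    set φ : ℝ × ℝ → ℝ := fun x => if 0 ≤ x.2 then fluxPot Fp x else fluxPot Fm x with hφ
    have hφP : ∀ x ∈ sqP, φ =ᶠ[nhds x] fluxPot Fp := fun x hx => by
      filter_upwards [hoP.mem_nhds hx] with y hy
      exact if_pos hy.2.1.le
    have hφM : ∀ x ∈ sqM, φ =ᶠ[nhds x] fluxPot Fm := fun x hx => by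
      filter_upwards [hoM.mem_nhds hx] with y hy
      exact if_neg (not_le.2 hy.2.2)
    have hresP : ∀ x ∈ sqP, DifferentiableAt ℝ φ x ∧ scurl φ x = Fp x := fun x hx => by
      obtain ⟨r, h0, h1, hxr⟩ := hr x (hPall hx)
      obtain ⟨hd, hc⟩ := (hboxP r h0 h1).2 x ⟨hxr.1, hx.2.1, hxr.2.2⟩
      refine ⟨hd.congr_of_eventuallyEq (hφP x hx), ?_⟩
      rw [← hc]
      simp only [scurl, pd1, pd2, (hφP x hx).fderiv_eq]
    have hresM : ∀ x ∈ sqM, DifferentiableAt ℝ φ x ∧ scurl φ x = Fm x := fun x hx => by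
      obtain ⟨r, h0, h1, hxr⟩ := hr x (hMall hx)
      obtain ⟨hd, hc⟩ := (hboxM r h0 h1).2 x ⟨hxr.1, hxr.2.1, hx.2.2⟩
      refine ⟨hd.congr_of_eventuallyEq (hφM x hx), ?_⟩
      rw [← hc]
      simp only [scurl, pd1, pd2, (hφM x hx).fderiv_eq]
    refine ⟨φ, fun x hx => ?_, ?_, fun x hx => ?_, fun x hx => ?_⟩
    · obtain ⟨r, h0, h1, hxr⟩ := hr x hx
      have c1 : ContinuousOn φ (Icc (-r) r ×ˢ Icc 0 r) :=
        (hboxP r h0 h1).1.congr fun y hy => if_pos hy.2.1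
      have c2 : ContinuousOn φ (Icc (-r) r ×ˢ Icc (-r) 0) := by
        refine (hboxM r h0 h1).1.congr fun y hy => ?_
        rcases hy.2.2.lt_or_eq with hlt | heq
        · exact if_neg (not_le.2 hlt)
        · have hy1 : y = (y.1, 0) := Prod.ext rfl heq
          have h2 : φ y = fluxPot Fp y := if_pos heq.ge
          rw [h2, hy1]
          exact htrace y.1 (Icc_subset_Ioo (by linarith) h1 hy.1)
      have c3 := c2.union_of_isClosed c1 (isClosed_Icc.prod isClosed_Icc)
        (isClosed_Icc.prod isClosed_Icc)
      rw [← prod_union, Icc_union_Icc_eq_Icc (by linarith) h0.le] at c3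
      exact (c3.continuousAt (Filter.mem_of_superset
        ((isOpen_Ioo.prod isOpen_Ioo).mem_nhds hxr)
        (prod_mono Ioo_subset_Icc_self Ioo_subset_Icc_self))).continuousWithinAt
    · rintro x (hx | hx)
      · exact (hresP x hx).1
      · exact (hresM x hx).1
    · rw [(hresP x hx).2, ← hGupEq x hx, ← hGutpEq x hx]
    · rw [(hresM x hx).2, ← hGumEq x hx, ← hGutmEq x hx]
  · intro φ _ _ hφP hφM uc huc hgP hgM
    obtain ⟨Cp, hCp⟩ := exists_const_of_reconstruction hoP
      ((convex_Ioo _ _).prod (convex_Ioo _ _)).isPreconnected hlam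
      (fun x hx ξ => (hellp x (hsP hx) ξ).1) hup hφP (fun x hx => huc x (Or.inl hx)) hgP
    obtain ⟨Cm, hCm⟩ := exists_const_of_reconstruction hoM
      ((convex_Ioo _ _).prod (convex_Ioo _ _)).isPreconnected hlam
      (fun x hx ξ => (hellm x (hsM hx) ξ).1) hum hφM (fun x hx => huc x (Or.inr hx)) hgM
    exact ⟨Cp, Cm, hCp, hCm⟩
end
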